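/- Let λ=(λ₁,λ₂,λ₃,λ₄) with each λᵢ>0 and λ₁+λ₂+λ₃+λ₄=1, and suppose the minimum of the mixture masses m₁, m₂, m₃, m₄ is attained at a unique index k. Then every affine classifier (w,b) ∈ ℝ²×ℝ whose 0-1 risk under P_mix(λ) equals the infimum of the risk over all affine classifiers misclassifies the labeled point aₖ and correctly classifies the other three labeled points. -/

import Mathlib

/-! The four points form an XOR configuration: adding the two inequalities for `a₁, a₂` gives
`b > 0`, adding those for `a₃, a₄` gives `b < 0`, so every affine classifier misclassifies some
point (`exists_not_correct`). Conversely any single point can be the only one misclassified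
(`exists_only_error`), so the optimal risk is at most the smallest mass `mₖ`. Since the masses
are positive, misclassifying any `aⱼ` with `j ≠ k` costs at least `mⱼ > mₖ`; hence an optimal
classifier is right off `aₖ`, and must then be wrong at `aₖ`. -/

open Classical

/-- The four labeled points `a₁=((1,0),+1)`, `a₂=((−1,0),+1)`, `a₃=((0,1),−1)`,
`a₄=((0,−1),−1)` in `ℝ² × {±1}`. -/
def pts : Fin 4 → (ℝ × ℝ) × ℝ :=
  ![((1, 0), 1), ((-1, 0), 1), ((0, 1), -1), ((0, -1), -1)]

/-- The affine classifier `(w, b)` correctly classifies the labeled point `(x, y)`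
iff `y·(⟨w,x⟩ + b) > 0`. -/
def correct (w : ℝ × ℝ) (b : ℝ) (p : (ℝ × ℝ) × ℝ) : Prop :=
  0 < p.2 * (w.1 * p.1.1 + w.2 * p.1.2 + b)

/-- The 0-1 risk of the classifier `(w, b)` under the distribution assigning mass
`m j` to the labeled point `pts j`: the total mass of the misclassified points. -/
noncomputable def risk (w : ℝ × ℝ) (b : ℝ) (m : Fin 4 → ℝ) : ℝ :=
  ∑ j : Fin 4, if correct w b (pts j) then 0 else m j

/-- The masses of the four component distributions `P¹, P², P³, P⁴`
on the labeled points `(a₁, a₂, a₃, a₄)`. -/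
noncomputable def comp : Fin 4 → Fin 4 → ℝ :=
  ![![1/2, 0, 1/4, 1/4], ![0, 1/2, 1/4, 1/4],
    ![1/4, 1/4, 1/2, 0], ![1/4, 1/4, 0, 1/2]]

/-- The masses `m₁, m₂, m₃, m₄` that the mixture `P_mix(λ)` assigns to the labeled
points `(a₁, a₂, a₃, a₄)`. -/
noncomputable def mmix (l : Fin 4 → ℝ) : Fin 4 → ℝ :=
  ![l 0 / 2 + l 2 / 4 + l 3 / 4, l 1 / 2 + l 2 / 4 + l 3 / 4,
    l 0 / 4 + l 1 / 4 + l 2 / 2, l 0 / 4 + l 1 / 4 + l 3 / 2]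

theorem exists_not_correct (w : ℝ × ℝ) (b : ℝ) : ∃ j, ¬ correct w b (pts j) := by
  by_contra! h
  have h0 := h 0
  have h1 := h 1
  have h2 := h 2
  have h3 := h 3
  simp [correct, pts] at h0 h1 h2 h3
  linarith

theorem exists_only_error (k : Fin 4) :
    ∃ (w : ℝ × ℝ) (b : ℝ), ∀ j, correct w b (pts j) ↔ j ≠ k := by
  -- The sign of `b` favours the class not containing `aₖ`; `w` points along the axis of `aₖ`
  -- and is long enough to rescue its antipode.
  refine ⟨(![(-2, 0), (2, 0), (0, 2), (0, -2)] : Fin 4 → ℝ × ℝ) k,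
    (![-1, -1, 1, 1] : Fin 4 → ℝ) k, fun j => ?_⟩
  fin_cases k <;> fin_cases j <;> norm_num [correct, pts]

theorem mmix_pos (l : Fin 4 → ℝ) (hpos : ∀ i, 0 < l i) (j : Fin 4) : 0 < mmix l j := by
  have h0 := hpos 0
  have h1 := hpos 1
  have h2 := hpos 2
  have h3 := hpos 3
  fin_cases j <;> simp [mmix] <;> positivity

theorem risk_nonneg (w : ℝ × ℝ) (b : ℝ) (m : Fin 4 → ℝ) (hm : ∀ j, 0 < m j) :
    0 ≤ risk w b m := by
  refine Finset.sum_nonneg fun j _ => ?_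
  split_ifs
  exacts [le_rfl, (hm j).le]

theorem le_risk_of_not_correct (w : ℝ × ℝ) (b : ℝ) (m : Fin 4 → ℝ) (hm : ∀ j, 0 < m j)
    (j : Fin 4) (hj : ¬ correct w b (pts j)) : m j ≤ risk w b m := by
  have h := Finset.single_le_sum (f := fun j => if correct w b (pts j) then 0 else m j)
    (fun i _ => by
      split_ifs
      exacts [le_rfl, (hm i).le]) (Finset.mem_univ j)
  simpa [risk, hj] using h

/-- If the minimum of the mixture masses `m₁, m₂, m₃, m₄` is attained at a unique
index `k`, then every affine classifier whose 0-1 risk under `P_mix(λ)` equals the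
infimum of the risk over all affine classifiers misclassifies `aₖ` and correctly
classifies the other three labeled points. -/
theorem optimal_classifier_misclassifies_min_mass (l : Fin 4 → ℝ)
    (hpos : ∀ i, 0 < l i) (hsum : ∑ i, l i = 1) (k : Fin 4)
    (hk : ∀ j, j ≠ k → mmix l k < mmix l j)
    (w : ℝ × ℝ) (b : ℝ)
    (hopt : risk w b (mmix l)
      = sInf {r : ℝ | ∃ (w' : ℝ × ℝ) (b' : ℝ), risk w' b' (mmix l) = r}) :
    ¬ correct w b (pts k) ∧ ∀ j, j ≠ k → correct w b (pts j) := by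
  have hm := mmix_pos l hpos
  have hle : risk w b (mmix l) ≤ mmix l k := by
    obtain ⟨w', b', h'⟩ := exists_only_error k
    rw [hopt]
    refine csInf_le ⟨0, ?_⟩ ⟨w', b', ?_⟩
    · rintro r ⟨v, c, rfl⟩
      exact risk_nonneg v c _ hm
    · simp [risk, h']
  have hcorrect : ∀ j, j ≠ k → correct w b (pts j) := by
    intro j hj
    by_contra hc
    linarith [hk j hj, le_risk_of_not_correct w b _ hm j hc]
  refine ⟨?_, hcorrect⟩
  obtain ⟨j, hj⟩ := exists_not_correct w b
  by_cases hjk : j = k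
  · exact hjk ▸ hj
  · exact absurd (hcorrect j hjk) hj
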